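/- arXiv:1503.05261 — 2 statements merged into one kernel-verified Lean document; each statement's English description precedes it below -/
import Mathlib

section
/- Let n ≥ 1 and let R = MvPolynomial (Fin n × Fin n) ℂ be the polynomial ring over ℂ in variables Y_{ij} (1 ≤ i,j ≤ n). Let J₁ ⊆ R be the ideal generated by the polynomials δ_{ij} − Σ_{k=1}^n Y_{ki}Y_{kj} for 1 ≤ i ≤ j ≤ n, the polynomials δ_{ij} − Σ_{k=1}^n Y_{ik}Y_{jk} for 1 ≤ i ≤ j ≤ n, and the polynomial 1 − det(Y), where det(Y) = Σ_{σ ∈ S_n} sgn(σ) Π_{i=1}^n Y_{iσ(i)} and δ_{ij} is the Kronecker delta. Then J₁ is a prime ideal of R and the Krull dimension of the quotient ring R/J₁ equals n(n−1)/2. -/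
/-!
Write `A` for the quotient of `ℂ[Y_{ij}]` by the ideal of the theorem. It represents the functor
sending a commutative `ℂ`-algebra `T` to the set of `M ∈ Mat_n(T)` with `Mᵀ M = 1` and
`det M = 1`, so algebra maps out of `A` are given by such matrices (`soLift`).
Integrality and dimension of `A` are read off from an explicit atlas of Cayley charts.

* The Cayley transform `M ↦ (1 - M)(1 + M)⁻¹` is an involution on matrices with `1 + M`
  invertible. It exchanges orthogonal and skew-symmetric matrices over any ring in which `2` is
  invertible, and skew-symmetric matrices go to determinant `1`. Hence `A[1 / det (1 + Y)]` is
  isomorphic to `B[1 / det (1 + S)]`, where `B` is the polynomial ring in the `n(n-1)/2` entries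
  above the diagonal of the generic skew-symmetric matrix `S` (`exists_cayley_equiv`). So this
  chart is a domain. It has dimension `n(n-1)/2`: localizing cannot raise the dimension of `B`,
  and by translation every `ℂ`-point of affine space has an ideal of full height
  (`ringKrullDim_away_mvPolynomial`).
* Translating by a diagonal sign matrix `D` of determinant `1` gives an isomorphic chart
  `det (1 + D Y) ≠ 0`. These charts cover `Spec A` (`span_chartDen`): over a field of
  characteristic not `2`, every square matrix `M` admits a sign matrix `D` with
  `det (D + M) ≠ 0`, because this determinant is affine in each diagonal entry of `D` and its
  top coefficient is `1`; if `M` is special orthogonal, the identity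
  `det (1 + Z) = det Z * det (1 + Z)` for orthogonal `Z = D M` forces `det D = 1`.
* Any two charts meet (`not_isNilpotent_chartDen_mul`). After translation, one chart is the
  standard one and the other belongs to a sign matrix with an even number of entries `-1`; a
  common point is the block matrix with `[[0, -1], [1, 0]]` on these entries and the identity
  elsewhere.

A ring covered by pairwise meeting basic opens whose coordinate rings are domains is a domain
(`eq_zero_or_eq_zero_of_cover`), and its dimension is computed on the charts
(`ringKrullDim_le_of_cover`).
-/

open MvPolynomial

/-- The determinant of the generic `n × n` matrix whose `(i,j)` entry is the
variable `Y i j` of the polynomial ring `ℂ[Y_{ij} : 1 ≤ i,j ≤ n]`. -/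
noncomputable def detY (n : ℕ) : MvPolynomial (Fin n × Fin n) ℂ :=
  Matrix.det (Matrix.of fun i j : Fin n => X (i, j))

open Matrix

/-! ### The Cayley transform -/

section Cayley
variable {m T : Type*} [Fintype m] [DecidableEq m] [CommRing T]

/-- The Cayley transform `(1 - M)(1 + M)⁻¹`, meaningful when `det (1 + M)` is a unit
(`Matrix.inv` is `0` otherwise). -/
noncomputable def cayley (M : Matrix m m T) : Matrix m m T := (1 - M) * (1 + M)⁻¹

lemma cayley_mul {M : Matrix m m T} (h : IsUnit (1 + M).det) :
    cayley M * (1 + M) = 1 - M := by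
  rw [cayley, Matrix.nonsing_inv_mul_cancel_right _ _ h]

lemma eq_cayley {M C : Matrix m m T} (h : IsUnit (1 + M).det) (hC : C * (1 + M) = 1 - M) :
    C = cayley M := by
  rw [cayley, ← hC, Matrix.mul_nonsing_inv_cancel_right _ _ h]

lemma one_add_cayley_mul {M : Matrix m m T} (h : IsUnit (1 + M).det) :
    (1 + cayley M) * (1 + M) = (2 : T) • 1 := by
  rw [add_mul, cayley_mul h, two_smul]; noncomm_ring

lemma isUnit_det_one_add_cayley {M : Matrix m m T} (h2 : IsUnit (2 : T))
    (h : IsUnit (1 + M).det) : IsUnit (1 + cayley M).det := by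
  have := congrArg Matrix.det (one_add_cayley_mul h)
  rw [det_mul, det_smul, det_one, mul_one] at this
  exact isUnit_of_mul_isUnit_left (this ▸ h2.pow _)

lemma cayley_cayley {M : Matrix m m T} (h2 : IsUnit (2 : T)) (h : IsUnit (1 + M).det) :
    cayley (cayley M) = M := by
  refine (eq_cayley (isUnit_det_one_add_cayley h2 h) ?_).symm
  have h1 : IsUnit (1 + M) := (Matrix.isUnit_iff_isUnit_det _).2 h
  apply h1.mul_right_cancel
  rw [Matrix.mul_assoc, one_add_cayley_mul h, sub_mul, cayley_mul h, two_smul]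
  noncomm_ring

lemma map_cayley {T' : Type*} [CommRing T'] (φ : T →+* T') {M : Matrix m m T}
    (h : IsUnit (1 + M).det) : (cayley M).map φ = cayley (M.map φ) := by
  have e : (1 + M).map φ = 1 + M.map φ := by
    simp [Matrix.map_add φ (map_add φ), Matrix.map_one φ]
  have h' : IsUnit (1 + M.map φ).det := by
    rw [← e]
    have := h.map φ
    rwa [RingHom.map_det] at this
  apply eq_cayley h'
  rw [← e, ← Matrix.map_mul, cayley_mul h, Matrix.map_sub φ (map_sub φ), Matrix.map_one φ (map_zero φ) (map_one φ)]

lemma det_one_sub_of_skew {M : Matrix m m T} (hM : Mᵀ = -M) : (1 - M).det = (1 + M).det := by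
  rw [← det_transpose (1 + M), transpose_add, hM, transpose_one, sub_eq_add_neg]

/-- The Cayley transform of a skew-symmetric matrix is orthogonal. -/
lemma cayley_transpose_mul_self {M : Matrix m m T} (h : IsUnit (1 + M).det) (hM : Mᵀ = -M) :
    (cayley M)ᵀ * cayley M = 1 := by
  have h1 : IsUnit (1 + M) := (Matrix.isUnit_iff_isUnit_det _).2 h
  have h1' : IsUnit (1 - M) :=
    (Matrix.isUnit_iff_isUnit_det _).2 (by rwa [det_one_sub_of_skew hM])
  have ht := congrArg transpose (cayley_mul h)
  simp only [transpose_mul, transpose_add, transpose_sub, transpose_one, hM, sub_neg_eq_add,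
    ← sub_eq_add_neg] at ht
  apply h1.mul_right_cancel
  apply h1'.mul_left_cancel
  rw [Matrix.mul_assoc, cayley_mul h, ← Matrix.mul_assoc, ht]
  noncomm_ring

lemma det_cayley_of_skew {M : Matrix m m T} (h : IsUnit (1 + M).det) (hM : Mᵀ = -M) :
    (cayley M).det = 1 := by
  have := congrArg det (cayley_mul h)
  rw [det_mul, det_one_sub_of_skew hM] at this
  exact h.mul_right_cancel (by rw [this, one_mul])

/-- The Cayley transform of an orthogonal matrix is skew-symmetric. -/
lemma transpose_cayley_of_orthogonal {M : Matrix m m T} (h : IsUnit (1 + M).det)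
    (hM : Mᵀ * M = 1) : (cayley M)ᵀ = -cayley M := by
  have h1 : IsUnit (1 + M) := (Matrix.isUnit_iff_isUnit_det _).2 h
  have h1' : IsUnit (1 + Mᵀ) := (Matrix.isUnit_iff_isUnit_det _).2 (by
    rwa [← transpose_one, ← transpose_add, det_transpose])
  have ht := congrArg transpose (cayley_mul h)
  simp only [transpose_mul, transpose_add, transpose_sub, transpose_one] at ht
  apply h1.mul_right_cancel
  apply h1'.mul_left_cancel
  rw [← Matrix.mul_assoc, ht, Matrix.neg_mul, cayley_mul h]
  simp only [sub_mul, mul_add, add_mul, mul_sub, hM, mul_neg, one_mul, mul_one]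
  abel

/-- This comes from `1 + Z = Z (Zᵀ + 1)`. Consequently `det (1 + Z) ≠ 0` forces `det Z = 1` over a
field. -/
lemma det_one_add_of_orthogonal {Z : Matrix m m T} (hZ : Zᵀ * Z = 1) :
    (1 + Z).det = Z.det * (1 + Z).det := by
  have h' : Z * Zᵀ = 1 := mul_eq_one_comm.1 hZ
  rw [← det_transpose (1 + Z), ← det_mul, transpose_add, transpose_one, mul_add, h', mul_one,
    add_comm Z, ← det_transpose, transpose_add, transpose_one, transpose_transpose]

end Cayley

/-! ### Diagonal sign matrices -/

/-- The diagonal matrix over `T` with entries `d i = ±1`. -/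
def signMat {m : Type*} [DecidableEq m] (d : m → ℤˣ) (T : Type*) [CommRing T] : Matrix m m T :=
  diagonal fun i => ((d i : ℤ) : T)

section Sign
variable {m T : Type*} [DecidableEq m] [CommRing T]

@[simp] lemma signMat_transpose (d : m → ℤˣ) : (signMat d T)ᵀ = signMat d T := by
  simp [signMat]

lemma map_signMat {T' : Type*} [CommRing T'] (φ : T →+* T') (d : m → ℤˣ) :
    (signMat d T).map φ = signMat d T' := by
  simp [signMat, diagonal_map]

variable [Fintype m]

@[simp] lemma signMat_mul_self (d : m → ℤˣ) : signMat d T * signMat d T = 1 := by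
  rw [signMat, diagonal_mul_diagonal, ← diagonal_one]
  congr 1; ext i
  rcases Int.units_eq_one_or (d i) with h | h <;> simp [h]

lemma signMat_mul (d e : m → ℤˣ) : signMat d T * signMat e T = signMat (d * e) T := by
  simp [signMat]

lemma det_signMat (d : m → ℤˣ) : (signMat d T).det = (((∏ i, d i : ℤˣ) : ℤ) : T) := by
  simp [signMat, det_diagonal, Units.coe_prod]

lemma signMat_mul_orthogonal (d : m → ℤˣ) {M : Matrix m m T} (hM : Mᵀ * M = 1) :
    (signMat d T * M)ᵀ * (signMat d T * M) = 1 := by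
  rw [transpose_mul, signMat_transpose, Matrix.mul_assoc, ← Matrix.mul_assoc _ _ M,
    signMat_mul_self, one_mul, hM]

/-- Interpolation between the identity (`s = ∅`) and `D + M` (`s = univ`), one row at a time. In
each step the determinant has the form `± u + v` in terms of the new sign, with `u ≠ 0` by
induction, so it is nonzero for at least one choice of sign. -/
lemma exists_sign_det_ne_zero_aux {K : Type*} [Field K] (h2 : (2 : K) ≠ 0) (M : Matrix m m K)
    (s : Finset m) : ∃ d : m → ℤˣ,
      det (of fun i => if i ∈ s then Pi.single i (((d i : ℤ) : K)) + M i else Pi.single i 1) ≠ 0 := by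
  induction s using Finset.induction_on with
  | empty =>
    refine ⟨1, ?_⟩
    have : (of fun i : m => (Pi.single i (1 : K) : m → K)) = 1 := by
      ext i j; simp [one_apply, Pi.single_apply, eq_comm]
    simp [this]
  | insert a s ha ih =>
    obtain ⟨d, hd⟩ := ih
    by_contra! hcon
    set N : Matrix m m K :=
      of fun i => if i ∈ s then Pi.single i (((d i : ℤ) : K)) + M i else Pi.single i 1 with hN
    -- The determinant obtained by giving row `a` the sign `u`, expanded along that row.
    have key : ∀ u : ℤˣ, ((u : ℤ) : K) * N.det + (N.updateRow a (M a)).det = 0 := by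
      intro u
      rw [← hcon (Function.update d a u)]
      have : N.det = (N.updateRow a (Pi.single a 1)).det := by
        congr 1
        ext i j
        rcases eq_or_ne i a with rfl | hi
        · simp [hN, ha]
        · simp [hi]
      rw [this, ← det_updateRow_smul, ← det_updateRow_add]
      congr 1
      ext i j
      rcases eq_or_ne i a with rfl | hi
      · simp [Pi.single_apply]
      · simp [hi, hN]
    have h1 := key 1
    have h3 := key (-1)
    push_cast at h1 h3
    apply hd
    have : (2 : K) * N.det = 0 := by linear_combination h1 - h3
    exact (mul_eq_zero.1 this).resolve_left h2

lemma exists_sign_det_ne_zero {K : Type*} [Field K] (h2 : (2 : K) ≠ 0) (M : Matrix m m K) :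
    ∃ d : m → ℤˣ, (signMat d K + M).det ≠ 0 := by
  obtain ⟨d, hd⟩ := exists_sign_det_ne_zero_aux h2 M Finset.univ
  refine ⟨d, ?_⟩
  convert hd using 2
  ext i j
  simp [signMat, diagonal_apply, Pi.single_apply, eq_comm]

/-- For special orthogonal `M`, a sign matrix `D` with `det (D + M) ≠ 0` automatically has
determinant `1`. -/
lemma exists_specialSign {K : Type*} [Field K] (h2 : (2 : K) ≠ 0) {M : Matrix m m K}
    (hM : Mᵀ * M = 1) (hdet : M.det = 1) :
    ∃ d : m → ℤˣ, ∏ i, d i = 1 ∧ (1 + signMat d K * M).det ≠ 0 := by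
  obtain ⟨d, hd⟩ := exists_sign_det_ne_zero h2 M
  have h : (1 + signMat d K * M).det ≠ 0 := by
    intro h0
    apply hd
    have : signMat d K + M = signMat d K * (1 + signMat d K * M) := by
      rw [mul_add, ← Matrix.mul_assoc, signMat_mul_self, mul_one, one_mul]
    rw [this, det_mul, h0, mul_zero]
  refine ⟨d, ?_, h⟩
  have h1 := det_one_add_of_orthogonal (signMat_mul_orthogonal d hM)
  rw [det_mul, hdet, mul_one, det_signMat] at h1
  rcases Int.units_eq_one_or (∏ i, d i) with h3 | h3
  · exact h3
  · rw [h3] at h1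
    push_cast at h1
    have : (2 : K) * (1 + signMat d K * M).det = 0 := by linear_combination h1
    exact absurd ((mul_eq_zero.1 this).resolve_left h2) h

/-- The standard chart and the chart of an even sign matrix have a common complex point: the
identity on the entries `1`, and the complex structure `Matrix.J` on the entries `-1`. -/
lemma exists_bridge (d : m → ℤˣ) (hd : ∏ i, d i = 1) :
    ∃ z : Matrix m m ℂ, zᵀ * z = 1 ∧ z.det = 1 ∧ (1 + z).det ≠ 0 ∧
      (1 + signMat d ℂ * z).det ≠ 0 := by
  classical
  let p : m → Prop := fun i => d i = -1
  have hcard : Even (Fintype.card {i // p i}) := by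
    have h1 : ∏ i, d i = ∏ i, if p i then (-1 : ℤˣ) else 1 := by
      refine Finset.prod_congr rfl fun i _ => ?_
      rcases Int.units_eq_one_or (d i) with h | h <;> simp [p, h]
    rw [h1, Finset.prod_ite, Finset.prod_const, Finset.prod_const_one, mul_one] at hd
    rw [Fintype.card_subtype]
    by_contra hodd
    rw [Nat.not_even_iff_odd] at hodd
    rw [hodd.neg_one_pow] at hd
    exact absurd hd (by decide)
  obtain ⟨k, hk⟩ := hcard
  have e₁ : {i // p i} ≃ Fin k ⊕ Fin k := Fintype.equivOfCardEq (by simp [hk])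
  let e : (Fin k ⊕ Fin k) ⊕ {i // ¬ p i} ≃ m :=
    (Equiv.sumCongr e₁.symm (Equiv.refl _)).trans (Equiv.sumCompl p)
  let J := Matrix.J (Fin k) ℂ
  have hJ : J * J = -1 := J_squared (Fin k) ℂ
  have hJt : Jᵀ = -J := J_transpose (Fin k) ℂ
  let w : Matrix ((Fin k ⊕ Fin k) ⊕ {i // ¬ p i}) ((Fin k ⊕ Fin k) ⊕ {i // ¬ p i}) ℂ :=
    fromBlocks J 0 0 1
  have hD : signMat d ℂ = reindex e e (fromBlocks (-1) 0 0 1) := by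
    rw [← (reindex e e).symm_apply_eq]
    ext i j
    rcases i with i | i <;> rcases j with j | j
    · have h1 : d (e (Sum.inl i)) = -1 := (e₁.symm i).2
      simp [signMat, diagonal_apply, h1, one_apply]
      split_ifs <;> simp
    · simp [signMat]
    · simp [signMat]
    · have h1 : d (e (Sum.inr i)) = 1 := (Int.units_eq_one_or _).resolve_right i.2
      simp [signMat, diagonal_apply, h1, one_apply]
  have hprod : (1 + J) * (1 - J) = (2 : ℂ) • 1 := by
    have : (1 + J) * (1 - J) = 1 - J * J := by noncomm_ring
    rw [this, hJ, two_smul]; noncomm_ring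
  have hdet : (1 + J).det * (1 - J).det ≠ 0 := by
    rw [← det_mul, hprod, det_smul, det_one, mul_one]
    exact pow_ne_zero _ two_ne_zero
  have hblk : ∀ N : Matrix (Fin k ⊕ Fin k) (Fin k ⊕ Fin k) ℂ, (1 + N).det ≠ 0 →
      (1 + reindex e e (fromBlocks N 0 0 (1 : Matrix {i // ¬ p i} {i // ¬ p i} ℂ))).det ≠ 0 := by
    intro N hN
    have : (1 : Matrix m m ℂ) = reindex e e (fromBlocks 1 0 0 1) := by
      rw [fromBlocks_one]; simp
    rw [this, ← coe_reindexLinearEquiv ℂ ℂ, ← map_add, coe_reindexLinearEquiv, det_reindex_self, fromBlocks_add]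
    simp only [add_zero]
    rw [det_fromBlocks_zero₂₁]
    refine mul_ne_zero hN ?_
    rw [← two_smul ℂ, det_smul, det_one, mul_one]
    exact pow_ne_zero _ two_ne_zero
  have horth : (reindex e e w)ᵀ * reindex e e w = 1 := by
    rw [transpose_reindex, reindex_apply, reindex_apply, submatrix_mul_equiv, fromBlocks_transpose, fromBlocks_multiply, hJt]
    simp [hJ]
  have h1 := hblk J (left_ne_zero_of_mul hdet)
  refine ⟨reindex e e w, horth, ?_, h1, ?_⟩
  · have := det_one_add_of_orthogonal horth
    exact mul_right_cancel₀ h1 (by rw [one_mul]; exact this.symm)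
  · rw [hD, reindex_apply, reindex_apply, submatrix_mul_equiv, fromBlocks_multiply]
    have := hblk (-J) (by rw [← sub_eq_add_neg]; exact right_ne_zero_of_mul hdet)
    simpa using this

end Sign

/-! ### Domains and Krull dimension from an open cover -/

section Ring
variable {A : Type*} [CommRing A]

/-- If basic opens `D(f i)` cover `Spec A`, have coordinate rings without zero divisors (stated by
clearing denominators), and meet pairwise, then `A` has no zero divisors. -/
lemma eq_zero_or_eq_zero_of_cover {ι : Type*} (f : ι → A)
    (hspan : Ideal.span (Set.range f) = ⊤)
    (hdom : ∀ i a b, a * b = 0 → (∃ k : ℕ, f i ^ k * a = 0) ∨ ∃ k : ℕ, f i ^ k * b = 0)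
    (hov : ∀ i j, ¬ IsNilpotent (f i * f j)) {a b : A} (hab : a * b = 0) : a = 0 ∨ b = 0 := by
  -- An element that dies on one chart dies on all charts, hence is zero.
  have key : ∀ (i : ι) (a : A), (∃ k : ℕ, f i ^ k * a = 0) → a = 0 := by
    rintro i a ⟨k, hk⟩
    have hall : ∀ j, ∃ l : ℕ, f j ^ l * a = 0 := by
      intro j
      rcases hdom j _ _ hk with ⟨l, hl⟩ | h
      · refine absurd ⟨k + l, ?_⟩ (hov i j)
        rw [mul_pow, pow_add, pow_add]
        linear_combination (f i ^ l * f j ^ k) * hl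
      · exact h
    by_contra ha
    -- The annihilator of `a` contains a power of every `f j`, and the `f j` generate `A`.
    let I : Ideal A := LinearMap.ker (LinearMap.toSpanSingleton A A a)
    have hI : ∀ x, x ∈ I ↔ x * a = 0 := fun x => by simp [I]
    have hItop : I ≠ ⊤ := by
      rw [Ne, Ideal.eq_top_iff_one, hI, one_mul]; exact ha
    obtain ⟨m, hm, hle⟩ := I.exists_le_maximal hItop
    apply hm.ne_top
    rw [eq_top_iff, ← hspan, Ideal.span_le]
    rintro _ ⟨j, rfl⟩
    obtain ⟨l, hl⟩ := hall j
    exact hm.isPrime.mem_of_pow_mem l (hle ((hI _).2 hl))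
  by_cases hι : Nonempty ι
  · obtain ⟨i⟩ := hι
    exact (hdom i a b hab).imp (key i a) (key i b)
  · rw [not_nonempty_iff] at hι
    rw [Set.range_eq_empty, Ideal.span_empty] at hspan
    have h : a ∈ (⊥ : Ideal A) := hspan ▸ Submodule.mem_top
    exact Or.inl (by simpa using h)

lemma exists_pow_mul_eq_zero_of_isDomain_away (f : A) [IsDomain (Localization.Away f)] {a b : A}
    (hab : a * b = 0) : (∃ k : ℕ, f ^ k * a = 0) ∨ ∃ k : ℕ, f ^ k * b = 0 := by
  have key : ∀ c : A, algebraMap A (Localization.Away f) c = 0 → ∃ k : ℕ, f ^ k * c = 0 := by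
    intro c hc
    obtain ⟨⟨_, k, rfl⟩, hk⟩ := (IsLocalization.map_eq_zero_iff (Submonoid.powers f) _ c).1 hc
    exact ⟨k, hk⟩
  have h := congrArg (algebraMap A (Localization.Away f)) hab
  rw [map_mul, map_zero] at h
  exact (mul_eq_zero.1 h).imp (key a) (key b)

lemma ringKrullDim_le_of_isLocalization (S : Submonoid A) (B : Type*) [CommRing B] [Algebra A B]
    [IsLocalization S B] : ringKrullDim B ≤ ringKrullDim A :=
  Order.krullDim_le_of_strictMono (PrimeSpectrum.comap (algebraMap A B))
    (Monotone.strictMono_of_injective (fun _ _ h => Ideal.comap_mono h)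
      (PrimeSpectrum.localization_comap_injective B S))

lemma ringKrullDim_le_of_cover {ι : Type*} (f : ι → A) (hspan : Ideal.span (Set.range f) = ⊤)
    (N : WithBot ℕ∞) (h : ∀ i, ringKrullDim (Localization.Away (f i)) ≤ N) :
    ringKrullDim A ≤ N := by
  rw [ringKrullDim_le_iff_isMaximal_height_le]
  intro m hm
  obtain ⟨i, hi⟩ : ∃ i, f i ∉ m := by
    by_contra! hcon
    apply hm.ne_top
    rw [eq_top_iff, ← hspan, Ideal.span_le]
    rintro _ ⟨j, rfl⟩
    exact hcon j
  have hdisj : Disjoint (Submonoid.powers (f i) : Set A) (m : Set A) :=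
    (Ideal.disjoint_powers_iff_notMem _ hm.isPrime.isRadical).2 hi
  have := IsLocalization.isPrime_of_isPrime_disjoint (Submonoid.powers (f i))
    (Localization.Away (f i)) m hm.isPrime hdisj
  rw [← IsLocalization.height_map_of_disjoint (S := Localization.Away (f i)) _ m hdisj]
  exact (Ideal.height_le_ringKrullDim_of_ne_top this.ne_top).trans (h i)

end Ring

/-- Inverting a polynomial does not change the dimension of affine space. Some maximal ideal of the
polynomial ring has height `card σ`; by the Nullstellensatz it is the ideal of a point, which a
translation moves to a point `a` where `g` does not vanish. -/
lemma ringKrullDim_away_mvPolynomial {σ : Type*} [Finite σ] (g : MvPolynomial σ ℂ) (a : σ → ℂ)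
    (hg : eval a g ≠ 0) : ringKrullDim (Localization.Away g) = Nat.card σ := by
  have hdim : ringKrullDim (MvPolynomial σ ℂ) = Nat.card σ := by
    rw [MvPolynomial.ringKrullDim_of_isNoetherianRing, ringKrullDim_eq_zero_of_field, zero_add]
  apply le_antisymm
  · exact hdim ▸ ringKrullDim_le_of_isLocalization (Submonoid.powers g) _
  have : FiniteRingKrullDim (MvPolynomial σ ℂ) := by
    rw [finiteRingKrullDim_iff_ne_bot_and_top, hdim]
    exact ⟨by simp, fun h => ENat.natCast_ne_top (Nat.card σ) (WithBot.coe_injective h)⟩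
  obtain ⟨m, hm, hheight⟩ := Ideal.exists_isMaximal_height (R := MvPolynomial σ ℂ)
  obtain ⟨x, rfl⟩ := isMaximal_iff_eq_vanishingIdeal_singleton.1 hm
  -- Translate so that the maximal ideal of full height sits at `a`.
  have hcomp : ∀ u v : σ → ℂ, u + v = 0 →
      (aeval (fun i => X i + C (u i)) : MvPolynomial σ ℂ →ₐ[ℂ] MvPolynomial σ ℂ).comp
        (aeval fun i => X i + C (v i)) = AlgHom.id ℂ _ := by
    intro u v huv
    ext i : 1
    have : u i + v i = 0 := congrFun huv i
    simp [add_assoc, ← C_add, this, algebraMap_eq]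
  let t : MvPolynomial σ ℂ ≃ₐ[ℂ] MvPolynomial σ ℂ :=
    AlgEquiv.ofAlgHom (aeval fun i => X i + C ((x - a) i)) (aeval fun i => X i + C ((a - x) i))
      (hcomp _ _ (by abel)) (hcomp _ _ (by abel))
  let m' := (vanishingIdeal ℂ {x}).comap t.symm.toRingEquiv
  have hmem : g ∉ m' := by
    intro h
    have h1 : aeval x (t.symm g) = 0 := h x rfl
    have h2 : (aeval x).comp (t.symm : MvPolynomial σ ℂ →ₐ[ℂ] MvPolynomial σ ℂ) = aeval a := by
      ext i; simp [t]
    have h3 := DFunLike.congr_fun h2 g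
    apply hg
    rw [← aeval_eq_eval, ← h1]
    exact h3.symm
  have hm' : m'.IsPrime := Ideal.IsPrime.comap _ (hK := hm.isPrime)
  have hdisj : Disjoint (Submonoid.powers g : Set (MvPolynomial σ ℂ)) (m' : Set _) :=
    (Ideal.disjoint_powers_iff_notMem _ hm'.isRadical).2 hmem
  have := IsLocalization.isPrime_of_isPrime_disjoint (Submonoid.powers g)
    (Localization.Away g) m' hm' hdisj
  rw [← hdim, ← hheight, ← RingEquiv.height_comap t.symm.toRingEquiv,
    ← IsLocalization.height_map_of_disjoint (S := Localization.Away g) _ m' hdisj]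
  exact Ideal.height_le_ringKrullDim_of_ne_top this.ne_top

/-! ### The coordinate ring of `SO(n)` -/

/-- The ideal of the theorem: the equations `Yᵀ Y = 1`, `Y Yᵀ = 1` and `det Y = 1`. -/
noncomputable def soIdeal (n : ℕ) : Ideal (MvPolynomial (Fin n × Fin n) ℂ) :=
  Ideal.span
      ({p | ∃ i j : Fin n, i ≤ j ∧
          p = (if i = j then 1 else 0) - ∑ k, X (k, i) * X (k, j)} ∪
       {p | ∃ i j : Fin n, i ≤ j ∧
          p = (if i = j then 1 else 0) - ∑ k, X (i, k) * X (j, k)} ∪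
       {1 - detY n})

/-- The coordinate ring of the scheme `SO(n)` over `ℂ`. -/
abbrev SOAlg (n : ℕ) : Type := MvPolynomial (Fin n × Fin n) ℂ ⧸ soIdeal n

/-- The tautological special orthogonal matrix over `SOAlg n`. -/
noncomputable def genY (n : ℕ) : Matrix (Fin n) (Fin n) (SOAlg n) :=
  Matrix.of fun i j => Ideal.Quotient.mk (soIdeal n) (X (i, j))

section SO
variable {n : ℕ} {T : Type*} [CommRing T] [Algebra ℂ T]

lemma genY_orthogonal : (genY n)ᵀ * genY n = 1 := by
  have key : ∀ i j : Fin n, i ≤ j → ((genY n)ᵀ * genY n) i j = (1 : Matrix _ _ (SOAlg n)) i j := by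
    intro i j hij
    have h : (if i = j then 1 else 0) - ∑ k, X (k, i) * X (k, j) ∈ soIdeal n :=
      Ideal.subset_span (Or.inl (Or.inl ⟨i, j, hij, rfl⟩))
    have h2 := Ideal.Quotient.eq_zero_iff_mem.2 h
    rw [map_sub, sub_eq_zero, map_sum] at h2
    simp only [mul_apply, transpose_apply, genY, of_apply, one_apply]
    simp only [map_mul] at h2
    rw [← h2]
    split_ifs <;> simp
  ext i j
  rcases le_total i j with h | h
  · exact key i j h
  · have hs : ((genY n)ᵀ * genY n)ᵀ = (genY n)ᵀ * genY n := by simp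
    rw [← hs, transpose_apply, key j i h, ← transpose_apply (1 : Matrix _ _ (SOAlg n)),
      transpose_one]

lemma det_genY : (genY n).det = 1 := by
  have h : 1 - detY n ∈ soIdeal n := Ideal.subset_span (Or.inr rfl)
  have h2 := Ideal.Quotient.eq_zero_iff_mem.2 h
  rw [map_sub, map_one, sub_eq_zero, detY, RingHom.map_det] at h2
  exact h2.symm

/-- The universal property: the algebra map out of `SOAlg n` classifying a special orthogonal
matrix `M` over `T`. -/
noncomputable def soLift (M : Matrix (Fin n) (Fin n) T) (hM : Mᵀ * M = 1) (hdet : M.det = 1) :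
    SOAlg n →ₐ[ℂ] T :=
  Ideal.Quotient.liftₐ (soIdeal n) (aeval fun p => M p.1 p.2) <| by
    have hM' : M * Mᵀ = 1 := mul_eq_one_comm.1 hM
    change soIdeal n ≤ RingHom.ker (aeval fun p : Fin n × Fin n => M p.1 p.2)
    rw [soIdeal, Ideal.span_le]
    rintro p ((⟨i, j, -, rfl⟩ | ⟨i, j, -, rfl⟩) | rfl)
    · have h := congrFun (congrFun hM i) j
      simp only [mul_apply, transpose_apply, one_apply] at h
      simp only [SetLike.mem_coe, RingHom.mem_ker, map_sub, map_sum, map_mul, aeval_X, h]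
      split_ifs <;> simp
    · have h := congrFun (congrFun hM' i) j
      simp only [mul_apply, transpose_apply, one_apply] at h
      simp only [SetLike.mem_coe, RingHom.mem_ker, map_sub, map_sum, map_mul, aeval_X, h]
      split_ifs <;> simp
    · have h : (aeval fun p : Fin n × Fin n => M p.1 p.2) (detY n) = M.det := by
        rw [detY, AlgHom.map_det]
        congr 1
        ext i j
        simp
      simp [RingHom.mem_ker, h, hdet]

@[simp] lemma map_soLift (M : Matrix (Fin n) (Fin n) T) (hM : Mᵀ * M = 1) (hdet : M.det = 1) :
    (genY n).map (soLift M hM hdet) = M := by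
  ext i j
  exact aeval_X (fun p : Fin n × Fin n => M p.1 p.2) (i, j)

lemma soAlg_hom_ext {φ ψ : SOAlg n →ₐ[ℂ] T} (h : (genY n).map φ = (genY n).map ψ) : φ = ψ := by
  apply Ideal.Quotient.algHom_ext
  ext p
  exact congrFun (congrFun h p.1) p.2

/-! ### The standard Cayley chart -/

variable (n) in
/-- The generic skew-symmetric matrix, over the polynomial ring in its entries above the
diagonal. -/
noncomputable def genS :
    Matrix (Fin n) (Fin n) (MvPolynomial {p : Fin n × Fin n // p.1 < p.2} ℂ) :=
  of fun i j => if h : i < j then X ⟨(i, j), h⟩ else if h : j < i then -X ⟨(j, i), h⟩ else 0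

lemma genS_skew : (genS n)ᵀ = -genS n := by
  ext i j : 1
  rcases lt_trichotomy i j with h | rfl | h
  · simp [genS, h, h.not_gt]
  · simp [genS]
  · simp [genS, h, h.not_gt]

lemma isUnit_two_of_algebra : IsUnit (2 : T) := by
  have := (IsUnit.mk0 (2 : ℂ) two_ne_zero).map (algebraMap ℂ T)
  rwa [map_ofNat] at this

/-- Specialization of the generic skew-symmetric matrix to a skew-symmetric `M`; only the entries of
`M` above the diagonal are used. -/
noncomputable def skewLift (M : Matrix (Fin n) (Fin n) T) :
    MvPolynomial {p : Fin n × Fin n // p.1 < p.2} ℂ →ₐ[ℂ] T :=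
  aeval fun p => M p.1.1 p.1.2

lemma map_skewLift {M : Matrix (Fin n) (Fin n) T} (hM : Mᵀ = -M) :
    (genS n).map (skewLift M) = M := by
  have hM' : ∀ i j, M j i = - M i j := fun i j => congrFun (congrFun hM i) j
  ext i j
  rcases lt_trichotomy i j with h | rfl | h
  · simp [genS, skewLift, h]
  · have h0 : (2 : T) * M i i = 0 := by linear_combination hM' i i
    simpa [genS, skewLift] using ((isUnit_two_of_algebra.mul_right_eq_zero).1 h0).symm
  · simp [genS, skewLift, h, h.not_gt, hM' i j]

lemma skew_hom_ext {φ ψ : MvPolynomial {p : Fin n × Fin n // p.1 < p.2} ℂ →ₐ[ℂ] T}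
    (h : (genS n).map φ = (genS n).map ψ) : φ = ψ := by
  ext p
  have := congrFun (congrFun h p.1.1) p.1.2
  simpa [genS, p.2] using this

lemma map_one_add_det {T' : Type*} [CommRing T'] [Algebra ℂ T'] (φ : T →ₐ[ℂ] T')
    (M : Matrix (Fin n) (Fin n) T) : φ (1 + M).det = (1 + M.map φ).det := by
  rw [AlgHom.map_det]
  congr 1
  ext i j
  simp [one_apply, apply_ite φ]

variable (n) in
/-- The function `det (1 + Y)` on `SO(n)`, whose nonvanishing locus is the standard chart. -/
noncomputable abbrev soDen : SOAlg n := (1 + genY n).det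

variable (n) in
/-- The function `det (1 + S)` on skew-symmetric matrices, whose nonvanishing locus is where the
Cayley transform is defined. -/
noncomputable abbrev skewDen : MvPolynomial {p : Fin n × Fin n // p.1 < p.2} ℂ :=
  (1 + genS n).det

lemma map_map_algHom {T' : Type*} [CommRing T'] [Algebra ℂ T'] {T'' : Type*} [CommRing T'']
    [Algebra ℂ T''] (ψ : T' →ₐ[ℂ] T'') (φ : T →ₐ[ℂ] T') (M : Matrix (Fin n) (Fin n) T) :
    M.map (ψ.comp φ) = (M.map φ).map ψ := by
  ext; simp

lemma isUnit_det_one_add_away {f : T} {M : Matrix (Fin n) (Fin n) T} (hf : (1 + M).det = f) :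
    IsUnit (1 + M.map (Algebra.algHom ℂ T (Localization.Away f))).det := by
  have := map_one_add_det (Algebra.algHom ℂ T (Localization.Away f)) M
  rw [← this, hf]
  exact IsLocalization.Away.algebraMap_isUnit f

lemma exists_away_lift {T' : Type*} [CommRing T'] [Algebra ℂ T'] {f : T} (φ₀ : T →ₐ[ℂ] T')
    (hf : IsUnit (φ₀ f)) : ∃ φ : Localization.Away f →ₐ[ℂ] T',
      φ.comp (Algebra.algHom ℂ T (Localization.Away f)) = φ₀ :=
  ⟨IsLocalization.Away.liftAlgHom f hf, by
    ext x
    exact IsLocalization.Away.lift_eq (g := (φ₀ : T →+* T')) f hf x⟩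

lemma away_hom_ext {T' : Type*} [CommRing T'] [Algebra ℂ T'] {f : T}
    {φ ψ : Localization.Away f →ₐ[ℂ] T'}
    (h : φ.comp (Algebra.algHom ℂ T (Localization.Away f)) =
      ψ.comp (Algebra.algHom ℂ T (Localization.Away f))) : φ = ψ := by
  apply AlgHom.coe_ringHom_injective
  apply IsLocalization.ringHom_ext (Submonoid.powers f)
  ext x
  exact DFunLike.congr_fun h x

/-- The Cayley transform identifies the standard chart of `SO(n)` with the open set
`det (1 + S) ≠ 0` of the affine space of skew-symmetric matrices. -/
lemma exists_cayley_equiv (n : ℕ) :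
    Nonempty (Localization.Away (soDen n) ≃ₐ[ℂ] Localization.Away (skewDen n)) := by
  -- The tautological matrices over the two localizations, and their Cayley transforms.
  let ιA := Algebra.algHom ℂ (SOAlg n) (Localization.Away (soDen n))
  let ιB := Algebra.algHom ℂ (MvPolynomial {p : Fin n × Fin n // p.1 < p.2} ℂ)
    (Localization.Away (skewDen n))
  have hY : IsUnit (1 + (genY n).map ιA).det := isUnit_det_one_add_away rfl
  have hS : IsUnit (1 + (genS n).map ιB).det := isUnit_det_one_add_away rfl
  have hYo : ((genY n).map ιA)ᵀ * (genY n).map ιA = 1 := by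
    rw [← transpose_map, ← Matrix.map_mul, genY_orthogonal, Matrix.map_one _ (map_zero _) (map_one _)]
  have hSs : ((genS n).map ιB)ᵀ = -(genS n).map ιB := by
    rw [← transpose_map, genS_skew]; ext; simp
  have hCY := transpose_cayley_of_orthogonal hY hYo
  let φ₀ : SOAlg n →ₐ[ℂ] Localization.Away (skewDen n) :=
    soLift (cayley ((genS n).map ιB)) (cayley_transpose_mul_self hS hSs) (det_cayley_of_skew hS hSs)
  let ψ₀ : MvPolynomial {p : Fin n × Fin n // p.1 < p.2} ℂ →ₐ[ℂ] Localization.Away (soDen n) :=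
    skewLift (cayley ((genY n).map ιA))
  have hφ₀ : (genY n).map φ₀ = cayley ((genS n).map ιB) := map_soLift _ _ _
  have hψ₀ : (genS n).map ψ₀ = cayley ((genY n).map ιA) := map_skewLift hCY
  have hφu : IsUnit (φ₀ (soDen n)) := by
    rw [soDen, map_one_add_det, hφ₀]
    exact isUnit_det_one_add_cayley isUnit_two_of_algebra hS
  have hψu : IsUnit (ψ₀ (skewDen n)) := by
    rw [skewDen, map_one_add_det, hψ₀]
    exact isUnit_det_one_add_cayley isUnit_two_of_algebra hY
  obtain ⟨φ, hφι⟩ : ∃ φ : _ →ₐ[ℂ] _, φ.comp ιA = φ₀ := exists_away_lift φ₀ hφu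
  obtain ⟨ψ, hψι⟩ : ∃ ψ : _ →ₐ[ℂ] _, ψ.comp ιB = ψ₀ := exists_away_lift ψ₀ hψu
  refine ⟨AlgEquiv.ofAlgHom φ ψ ?_ ?_⟩
  · refine away_hom_ext (f := skewDen n) ?_
    change (φ.comp ψ).comp ιB = (AlgHom.id ℂ _).comp ιB
    apply skew_hom_ext
    rw [AlgHom.comp_assoc, hψι, map_map_algHom, hψ₀]
    have := map_cayley (φ : _ →+* Localization.Away (skewDen n)) hY
    refine this.trans ?_
    change cayley (((genY n).map ιA).map φ) = _
    rw [← map_map_algHom, hφι, hφ₀, cayley_cayley isUnit_two_of_algebra hS]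
    rfl
  · refine away_hom_ext (f := soDen n) ?_
    change (ψ.comp φ).comp ιA = (AlgHom.id ℂ _).comp ιA
    apply soAlg_hom_ext
    rw [AlgHom.comp_assoc, hφι, map_map_algHom, hφ₀]
    have := map_cayley (ψ : _ →+* Localization.Away (soDen n)) hS
    refine this.trans ?_
    change cayley (((genS n).map ιB).map ψ) = _
    rw [← map_map_algHom, hψι, hψ₀, cayley_cayley isUnit_two_of_algebra hY]
    rfl

lemma eval_skewDen : eval 0 (skewDen n) ≠ 0 := by
  have h : aeval (0 : {p : Fin n × Fin n // p.1 < p.2} → ℂ) (skewDen n) = 1 := by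
    rw [skewDen, map_one_add_det]
    have : (genS n).map (aeval (0 : {p : Fin n × Fin n // p.1 < p.2} → ℂ)) = 0 := by
      ext i j
      simp only [genS, map_apply, of_apply, Matrix.zero_apply]
      split_ifs <;> simp
    rw [this, add_zero, det_one]
  rw [← aeval_eq_eval]
  exact h ▸ one_ne_zero

instance : IsDomain (Localization.Away (soDen n)) := by
  obtain ⟨e⟩ := exists_cayley_equiv n
  have hne : skewDen n ≠ 0 := fun h => eval_skewDen (n := n) (by rw [h, map_zero])
  have : IsDomain (Localization.Away (skewDen n)) :=
    IsLocalization.isDomain_localization (powers_le_nonZeroDivisors_of_noZeroDivisors hne)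
  exact e.toMulEquiv.isDomain _

lemma card_pairs : Nat.card {p : Fin n × Fin n // p.1 < p.2} = n * (n - 1) / 2 := by
  let e : {p : Fin n × Fin n // p.1 < p.2} ≃ Σ j : Fin n, Fin j :=
    { toFun := fun p => ⟨p.1.2, p.1.1, p.2⟩
      invFun := fun q => ⟨(⟨q.2, q.2.2.trans q.1.2⟩, q.1), q.2.2⟩
      left_inv := fun _ => rfl
      right_inv := fun _ => rfl }
  rw [Nat.card_congr e, Nat.card_eq_fintype_card, Fintype.card_sigma]
  simp only [Fintype.card_fin]
  rw [Fin.sum_univ_eq_sum_range (fun i => i), Finset.sum_range_id]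

lemma ringKrullDim_away_soDen :
    ringKrullDim (Localization.Away (soDen n)) = (n * (n - 1) / 2 : ℕ) := by
  obtain ⟨e⟩ := exists_cayley_equiv n
  rw [ringKrullDim_eq_of_ringEquiv e.toRingEquiv, ringKrullDim_away_mvPolynomial _ 0 eval_skewDen,
    card_pairs]

/-! ### Translated charts -/

/-- Left translation `Y ↦ D Y` by a sign matrix `D` of determinant `1`. -/
noncomputable def signTrans (d : Fin n → ℤˣ) (hd : ∏ i, d i = 1) : SOAlg n →ₐ[ℂ] SOAlg n :=
  soLift (signMat d _ * genY n) (signMat_mul_orthogonal d genY_orthogonal)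
    (by rw [det_mul, det_genY, det_signMat, hd]; simp)

lemma map_signTrans (d : Fin n → ℤˣ) (hd : ∏ i, d i = 1) :
    (genY n).map (signTrans d hd) = signMat d _ * genY n := map_soLift _ _ _

lemma signTrans_comp_self (d : Fin n → ℤˣ) (hd : ∏ i, d i = 1) :
    (signTrans d hd).comp (signTrans d hd) = AlgHom.id ℂ _ := by
  apply soAlg_hom_ext
  rw [map_map_algHom, map_signTrans]
  have h : (signMat d (SOAlg n) * genY n).map (signTrans d hd) =
      (signMat d (SOAlg n)).map (signTrans d hd) * (genY n).map (signTrans d hd) :=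
    Matrix.map_mul
  have h' : (signMat d (SOAlg n)).map (signTrans d hd) = signMat d (SOAlg n) :=
    map_signMat (signTrans d hd : SOAlg n →+* SOAlg n) d
  rw [h, h', map_signTrans, ← Matrix.mul_assoc, signMat_mul_self, one_mul]
  ext; simp

/-- Left translation by a sign matrix `D` of determinant `1`, an involution of `SOAlg n`. -/
noncomputable def signEquiv (d : Fin n → ℤˣ) (hd : ∏ i, d i = 1) : SOAlg n ≃ₐ[ℂ] SOAlg n :=
  AlgEquiv.ofAlgHom (signTrans d hd) (signTrans d hd) (signTrans_comp_self d hd)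
    (signTrans_comp_self d hd)

variable (n) in
/-- The function `det (1 + D Y)`, whose nonvanishing locus is the translated chart. -/
noncomputable def chartDen (d : {d : Fin n → ℤˣ // ∏ i, d i = 1}) : SOAlg n :=
  (1 + signMat d.1 _ * genY n).det

lemma chartDen_eq (d : {d : Fin n → ℤˣ // ∏ i, d i = 1}) :
    chartDen n d = signEquiv d.1 d.2 (soDen n) := by
  change _ = signTrans d.1 d.2 (soDen n)
  rw [soDen, map_one_add_det, map_signTrans, chartDen]

lemma exists_chart_equiv (d : {d : Fin n → ℤˣ // ∏ i, d i = 1}) :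
    Nonempty (Localization.Away (soDen n) ≃+* Localization.Away (chartDen n d)) := by
  refine ⟨IsLocalization.ringEquivOfRingEquiv (M := Submonoid.powers (soDen n))
    (T := Submonoid.powers (chartDen n d)) _ _ (signEquiv d.1 d.2).toRingEquiv ?_⟩
  rw [chartDen_eq]
  exact Submonoid.map_powers _ _

lemma soLift_chartDen (z : Matrix (Fin n) (Fin n) T) (hz : zᵀ * z = 1) (hdet : z.det = 1)
    (d : {d : Fin n → ℤˣ // ∏ i, d i = 1}) :
    soLift z hz hdet (chartDen n d) = (1 + signMat d.1 T * z).det := by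
  have h : (signMat d.1 (SOAlg n) * genY n).map (soLift z hz hdet) =
      (signMat d.1 (SOAlg n)).map (soLift z hz hdet) * (genY n).map (soLift z hz hdet) :=
    Matrix.map_mul
  have h' : (signMat d.1 (SOAlg n)).map (soLift z hz hdet) = signMat d.1 T :=
    map_signMat (soLift z hz hdet : SOAlg n →+* T) d.1
  rw [chartDen, map_one_add_det, h, h', map_soLift]

/-- The translated charts cover `Spec (SOAlg n)`. -/
lemma span_chartDen : Ideal.span (Set.range (chartDen n)) = ⊤ := by
  by_contra hne
  obtain ⟨m, hm, hle⟩ := Ideal.exists_le_maximal _ hne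
  let _ := Ideal.Quotient.field m
  let π : SOAlg n →ₐ[ℂ] SOAlg n ⧸ m := Ideal.Quotient.mkₐ ℂ m
  have ho : ((genY n).map π)ᵀ * (genY n).map π = 1 := by
    rw [← transpose_map, ← Matrix.map_mul, genY_orthogonal, Matrix.map_one _ (map_zero _) (map_one _)]
  have hdet : ((genY n).map π).det = 1 := by
    have := AlgHom.map_det π (genY n)
    rw [det_genY, map_one] at this
    exact this.symm
  obtain ⟨d, hd, hne⟩ := exists_specialSign (isUnit_two_of_algebra (T := SOAlg n ⧸ m)).ne_zero
    ho hdet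
  have hπ : π = soLift _ ho hdet := soAlg_hom_ext (by rw [map_soLift])
  apply hne
  rw [← soLift_chartDen _ ho hdet ⟨d, hd⟩, ← hπ]
  exact Ideal.Quotient.eq_zero_iff_mem.2 (hle (Ideal.subset_span ⟨_, rfl⟩))

/-- Any two charts meet. The common point is `D z`, with `D` the sign matrix of `d` and `z` a common
point of the standard chart and the chart of the product of both signs. -/
lemma not_isNilpotent_chartDen_mul (d e : {d : Fin n → ℤˣ // ∏ i, d i = 1}) :
    ¬ IsNilpotent (chartDen n d * chartDen n e) := by
  obtain ⟨z, hz, hdet, h1, h2⟩ := exists_bridge (e.1 * d.1)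
    (by simp [Finset.prod_mul_distrib, d.2, e.2])
  intro hnil
  have hy := signMat_mul_orthogonal d.1 hz
  have hydet : (signMat d.1 ℂ * z).det = 1 := by rw [det_mul, hdet, det_signMat, d.2]; simp
  have := (hnil.map (soLift _ hy hydet)).eq_zero
  rw [map_mul, soLift_chartDen, soLift_chartDen, ← Matrix.mul_assoc, ← Matrix.mul_assoc,
    signMat_mul_self, one_mul, signMat_mul] at this
  exact mul_ne_zero h1 h2 this

variable (n) in
lemma isDomain_soAlg : IsDomain (SOAlg n) := by
  have : Nontrivial (SOAlg n) :=
    (soLift (1 : Matrix (Fin n) (Fin n) ℂ) (by simp) (by simp)).toRingHom.domain_nontrivial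
  have : NoZeroDivisors (SOAlg n) := ⟨fun hab => by
    refine eq_zero_or_eq_zero_of_cover (chartDen n) span_chartDen (fun d a b h => ?_)
      not_isNilpotent_chartDen_mul hab
    obtain ⟨e⟩ := exists_chart_equiv d
    have := e.symm.toMulEquiv.isDomain _
    exact exists_pow_mul_eq_zero_of_isDomain_away _ h⟩
  exact NoZeroDivisors.to_isDomain _

variable (n) in
lemma ringKrullDim_soAlg : ringKrullDim (SOAlg n) = (n * (n - 1) / 2 : ℕ) := by
  apply le_antisymm
  · refine ringKrullDim_le_of_cover (chartDen n) span_chartDen _ fun d => ?_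
    obtain ⟨e⟩ := exists_chart_equiv d
    rw [← ringKrullDim_eq_of_ringEquiv e, ringKrullDim_away_soDen]
  · rw [← ringKrullDim_away_soDen]
    exact ringKrullDim_le_of_isLocalization (Submonoid.powers (soDen n)) _

end SO

theorem vanishing_ideal_of_SOn_is_prime_and_dim
    (n : ℕ) (hn : 1 ≤ n) :
    let R := MvPolynomial (Fin n × Fin n) ℂ
    let J₁ : Ideal R := Ideal.span
      ({p | ∃ i j : Fin n, i ≤ j ∧
          p = (if i = j then 1 else 0) - ∑ k, X (k, i) * X (k, j)} ∪
       {p | ∃ i j : Fin n, i ≤ j ∧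
          p = (if i = j then 1 else 0) - ∑ k, X (i, k) * X (j, k)} ∪
       {1 - detY n})
    J₁.IsPrime ∧ ringKrullDim (R ⧸ J₁) = ((n * (n - 1)) / 2 : ℕ) :=
  ⟨(Ideal.Quotient.isDomain_iff_prime (soIdeal n)).1 (isDomain_soAlg n), ringKrullDim_soAlg n⟩
end

section
/- Let μ be the Haar probability measure on SO(3) and define the diagonal Fisher integral f̃ : ℝ³ → ℝ by f̃(x₁,x₂,x₃) = ∫_{SO(3)} exp(x₁y₁₁ + x₂y₂₂ + x₃y₃₃) dμ(y). Then for each cyclic permutation (i,j,k) ∈ {(1,2,3),(2,3,1),(3,1,2)} and every x ∈ ℝ³: (x_i² − x_j²)·(∂²f̃/∂x_i∂x_j)(x) − ( x_j·(∂f̃/∂x_i)(x) − x_i·(∂f̃/∂x_j)(x) ) − (x_i² − x_j²)·(∂f̃/∂x_k)(x) = 0. -/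
/-!
Write `E` for integration against `exp (∑ xₐ yₐₐ) dμ`. Differentiation under the integral turns
`∂/∂xₐ` into multiplication by `yₐₐ`, and the cofactor identity `adj y = yᵀ` on `SO(3)` gives
`yᵢᵢ yⱼⱼ - yₖₖ = yᵢⱼ yⱼᵢ`, so the claim is
`(xᵢ² - xⱼ²) E[yᵢⱼ yⱼᵢ] = xⱼ E[yᵢᵢ] - xᵢ E[yⱼⱼ]`.

Differentiating the left invariance under rotations of the `(i, j)`-plane, applied to the functions
`yᵢⱼ exp (∑ xₐ yₐₐ)` and `yⱼᵢ exp (∑ xₐ yₐₐ)`, gives (`stein_identities`)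
`xⱼ E[yᵢⱼ²] = xᵢ E[yᵢⱼ yⱼᵢ] + E[yⱼⱼ]` and `xᵢ E[yⱼᵢ²] = xⱼ E[yᵢⱼ yⱼᵢ] + E[yᵢᵢ]`.
A left invariant probability measure is also invariant under transposition, i.e. inversion
(`integral_transpose`), so `E[yᵢⱼ²] = E[yⱼᵢ²]`, and eliminating this common value proves the claim.
-/

open MeasureTheory Matrix

noncomputable instance matrixMeasurableSpace (n : ℕ) :
    MeasurableSpace (Matrix (Fin n) (Fin n) ℝ) := borel _

/-- The special orthogonal group `SO(n)`, viewed as a subset of the space of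
`n × n` real matrices. -/
def SO (n : ℕ) : Set (Matrix (Fin n) (Fin n) ℝ) :=
  {y | yᵀ * y = 1 ∧ y.det = 1}

/-- `μ` is the Haar probability measure of `SO(n)`, viewed as a measure on the space of
`n × n` real matrices: it is a probability measure carried by `SO(n)` which is invariant
under left translation by elements of `SO(n)`. -/
structure IsHaarSO (n : ℕ) (μ : Measure (Matrix (Fin n) (Fin n) ℝ)) : Prop where
  isProbabilityMeasure : IsProbabilityMeasure μ
  ae_mem : ∀ᵐ y ∂μ, y ∈ SO n
  left_invariant : ∀ a ∈ SO n, Measure.map (fun y => a * y) μ = μ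

/-- The diagonal Fisher integral `f̃(x₁,…,xₙ) = ∫_{SO(n)} exp(Σᵢ xᵢ yᵢᵢ) dμ(y)`. -/
noncomputable def fisherDiag (n : ℕ) (μ : Measure (Matrix (Fin n) (Fin n) ℝ))
    (x : Fin n → ℝ) : ℝ :=
  ∫ y, Real.exp (∑ i, x i * y i i) ∂μ

/-- The partial derivative operator `∂/∂xᵢ` on functions of `x = (x₁,…,xₙ) ∈ ℝⁿ`. -/
noncomputable def pdiag {n : ℕ} (i : Fin n) (g : (Fin n → ℝ) → ℝ) :
    (Fin n → ℝ) → ℝ :=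
  fun x => fderiv ℝ g x (Pi.single i 1)

/-! ### Compactness and differentiation under the integral -/

instance matrixBorelSpace (n : ℕ) : BorelSpace (Matrix (Fin n) (Fin n) ℝ) := ⟨rfl⟩

instance matrixSecondCountable (n : ℕ) :
    SecondCountableTopology (Matrix (Fin n) (Fin n) ℝ) :=
  inferInstanceAs (SecondCountableTopology (Fin n → Fin n → ℝ))

/-- The matrices with all entries in `[-1, 1]`, a compact set containing `SO n`. -/
def unitBox (n : ℕ) : Set (Matrix (Fin n) (Fin n) ℝ) :=
  Set.pi Set.univ fun _ => Set.pi Set.univ fun _ => Set.Icc (-1) 1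

lemma isCompact_unitBox (n : ℕ) : IsCompact (unitBox n) :=
  isCompact_univ_pi fun _ => isCompact_univ_pi fun _ => isCompact_Icc

lemma SO_subset_unitBox (n : ℕ) : SO n ⊆ unitBox n := by
  rintro y ⟨hy, -⟩ a - b -
  have h := congrFun (congrFun hy b) b
  rw [mul_apply, one_apply_eq] at h
  have h1 : y a b * y a b ≤ 1 := by
    rw [← h]
    exact Finset.single_le_sum (f := fun c => yᵀ b c * y c b)
      (fun c _ => mul_self_nonneg (y c b)) (Finset.mem_univ a)
  exact abs_le.mp (abs_le_one_iff_mul_self_le_one.mpr h1)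

lemma transpose_mem_SO {n : ℕ} {y : Matrix (Fin n) (Fin n) ℝ} (hy : y ∈ SO n) : yᵀ ∈ SO n :=
  ⟨by rw [transpose_transpose]; exact mul_eq_one_comm.mp hy.1, by rw [det_transpose]; exact hy.2⟩

lemma integrable_of_ae_mem_compact {X E : Type*} [TopologicalSpace X] [MeasurableSpace X]
    [OpensMeasurableSpace X] [T2Space X] [SecondCountableTopology X]
    [NormedAddCommGroup E] {ν : Measure X}
    [IsFiniteMeasure ν] {K : Set X} (hK : IsCompact K) (hν : ∀ᵐ y ∂ν, y ∈ K) {f : X → E}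
    (hf : Continuous f) : Integrable f ν := by
  obtain ⟨C, hC⟩ := hK.exists_bound_of_continuousOn hf.continuousOn
  exact Integrable.of_bound hf.aestronglyMeasurable C (hν.mono hC)

/-- Differentiation under the integral sign for jointly continuous integrands and a finite
measure carried by a compact set: continuity supplies the dominating constant. -/
lemma hasFDerivAt_integral_of_compact {X E : Type*} [TopologicalSpace X] [MeasurableSpace X]
    [OpensMeasurableSpace X] [T2Space X] [SecondCountableTopology X] [NormedAddCommGroup E]
    [NormedSpace ℝ E] [ProperSpace E]
    {ν : Measure X} [IsFiniteMeasure ν] {K : Set X} (hK : IsCompact K) (hν : ∀ᵐ y ∂ν, y ∈ K)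
    {F : E → X → ℝ} {F' : E → X → E →L[ℝ] ℝ} (hF : Continuous (Function.uncurry F))
    (hF' : Continuous (Function.uncurry F'))
    (h : ∀ t y, HasFDerivAt (fun t => F t y) (F' t y) t) (t₀ : E) :
    HasFDerivAt (fun t => ∫ y, F t y ∂ν) (∫ y, F' t₀ y ∂ν) t₀ := by
  obtain ⟨C, hC⟩ := ((isCompact_closedBall t₀ 1).prod hK).exists_bound_of_continuousOn
    hF'.continuousOn
  refine hasFDerivAt_integral_of_dominated_of_fderiv_le (bound := fun _ => C)
    (Metric.closedBall_mem_nhds t₀ one_pos) ?_ ?_ ?_ ?_ (integrable_const C) ?_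
  · exact Filter.Eventually.of_forall fun t =>
      (hF.comp (Continuous.prodMk_right t)).aestronglyMeasurable
  · exact integrable_of_ae_mem_compact hK hν (hF.comp (Continuous.prodMk_right t₀))
  · exact (hF'.comp (Continuous.prodMk_right t₀)).aestronglyMeasurable
  · exact hν.mono fun y hy t ht => hC (t, y) ⟨ht, hy⟩
  · exact Filter.Eventually.of_forall fun y t _ => h t y

/-! ### Haar measure on `SO n`: invariance and Fisher moments -/

section Haar

variable {n : ℕ} {μ : Measure (Matrix (Fin n) (Fin n) ℝ)}

lemma IsHaarSO.ae_mem_unitBox (hμ : IsHaarSO n μ) : ∀ᵐ y ∂μ, y ∈ unitBox n :=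
  hμ.ae_mem.mono fun _ hy => SO_subset_unitBox n hy

lemma IsHaarSO.integrable (hμ : IsHaarSO n μ) {f : Matrix (Fin n) (Fin n) ℝ → ℝ}
    (hf : Continuous f) : Integrable f μ :=
  have := hμ.isProbabilityMeasure
  integrable_of_ae_mem_compact (isCompact_unitBox n) hμ.ae_mem_unitBox hf

lemma IsHaarSO.integral_mul_left (hμ : IsHaarSO n μ) {f : Matrix (Fin n) (Fin n) ℝ → ℝ}
    (hf : Continuous f) {a : Matrix (Fin n) (Fin n) ℝ} (ha : a ∈ SO n) :
    ∫ y, f (a * y) ∂μ = ∫ y, f y ∂μ := by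
  have hc : Continuous fun y : Matrix (Fin n) (Fin n) ℝ => a * y := by fun_prop
  conv_rhs => rw [← hμ.left_invariant a ha]
  rw [integral_map hc.aemeasurable hf.aestronglyMeasurable]

/-- Haar measure is invariant under inversion: by left invariance in `b`, respectively in `a`, the
double integral of `f (aᵀ * b)` equals the integral of `f`, respectively of `f` transposed. -/
lemma IsHaarSO.integral_transpose (hμ : IsHaarSO n μ) {f : Matrix (Fin n) (Fin n) ℝ → ℝ}
    (hf : Continuous f) : ∫ y, f yᵀ ∂μ = ∫ y, f y ∂μ := by
  have := hμ.isProbabilityMeasure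
  have hft : Continuous fun y : Matrix (Fin n) (Fin n) ℝ => f yᵀ := by fun_prop
  have hint : Integrable (Function.uncurry fun a b : Matrix (Fin n) (Fin n) ℝ => f (aᵀ * b))
      (μ.prod μ) := by
    refine integrable_of_ae_mem_compact ((isCompact_unitBox n).prod (isCompact_unitBox n)) ?_ ?_
    · filter_upwards [Measure.quasiMeasurePreserving_fst.ae hμ.ae_mem_unitBox,
        Measure.quasiMeasurePreserving_snd.ae hμ.ae_mem_unitBox] with p h1 h2 using ⟨h1, h2⟩
    · unfold Function.uncurry
      fun_prop
  have h1 : ∫ a, ∫ b, f (aᵀ * b) ∂μ ∂μ = ∫ y, f y ∂μ := by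
    have : ∀ᵐ a ∂μ, ∫ b, f (aᵀ * b) ∂μ = ∫ y, f y ∂μ :=
      hμ.ae_mem.mono fun a ha => hμ.integral_mul_left hf (transpose_mem_SO ha)
    rw [integral_congr_ae this]
    simp
  have h2 : ∫ b, ∫ a, f (aᵀ * b) ∂μ ∂μ = ∫ y, f yᵀ ∂μ := by
    have : ∀ᵐ b ∂μ, ∫ a, f (aᵀ * b) ∂μ = ∫ y, f yᵀ ∂μ :=
      hμ.ae_mem.mono fun b hb => by
        rw [← hμ.integral_mul_left hft (transpose_mem_SO hb)]
        simp only [transpose_mul, transpose_transpose]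
    rw [integral_congr_ae this]
    simp
  rw [← h1, ← h2, integral_integral_swap hint]

/-- The Fisher-weighted moment `∫ p(y) exp(∑ xₐ yₐₐ) dμ(y)`. -/
noncomputable def moment (μ : Measure (Matrix (Fin n) (Fin n) ℝ))
    (p : Matrix (Fin n) (Fin n) ℝ → ℝ) (x : Fin n → ℝ) : ℝ :=
  ∫ y, p y * Real.exp (∑ a, x a * y a a) ∂μ

lemma fisherDiag_eq_moment : fisherDiag n μ = moment μ fun _ => 1 := by
  funext x
  simp [fisherDiag, moment]

/-- `∂/∂xᵢ` multiplies the integrand of a moment by `yᵢᵢ`. -/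
lemma IsHaarSO.pdiag_moment (hμ : IsHaarSO n μ) {p : Matrix (Fin n) (Fin n) ℝ → ℝ}
    (hp : Continuous p) (i : Fin n) :
    pdiag i (moment μ p) = moment μ fun y => y i i * p y := by
  have := hμ.isProbabilityMeasure
  funext x
  have hF' : Continuous (Function.uncurry fun (x : Fin n → ℝ) (y : Matrix (Fin n) (Fin n) ℝ) =>
      (p y * Real.exp (∑ a, x a * y a a)) •
        ∑ a, y a a • (ContinuousLinearMap.proj a : (Fin n → ℝ) →L[ℝ] ℝ)) := by
    unfold Function.uncurry
    fun_prop
  have key := hasFDerivAt_integral_of_compact (isCompact_unitBox n) hμ.ae_mem_unitBox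
    (F := fun (x : Fin n → ℝ) y => p y * Real.exp (∑ a, x a * y a a))
    (F' := fun x y => (p y * Real.exp (∑ a, x a * y a a)) •
        ∑ a, y a a • (ContinuousLinearMap.proj a : (Fin n → ℝ) →L[ℝ] ℝ))
    (by unfold Function.uncurry; fun_prop) hF'
    (fun x y => by
      have h1 : HasFDerivAt (fun x : Fin n → ℝ => ∑ a, x a * y a a)
          (∑ a, y a a • (ContinuousLinearMap.proj a : (Fin n → ℝ) →L[ℝ] ℝ)) x :=
        HasFDerivAt.fun_sum fun a _ => (hasFDerivAt_apply a x).mul_const (y a a)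
      rw [mul_smul]
      exact h1.exp.const_mul (p y)) x
  have hi : Integrable (fun y => (p y * Real.exp (∑ a, x a * y a a)) •
        ∑ a, y a a • (ContinuousLinearMap.proj a : (Fin n → ℝ) →L[ℝ] ℝ)) μ :=
    integrable_of_ae_mem_compact (isCompact_unitBox n) hμ.ae_mem_unitBox
      (hF'.comp (Continuous.prodMk_right x))
  change fderiv ℝ (fun x => ∫ y, p y * Real.exp (∑ a, x a * y a a) ∂μ) x (Pi.single i 1) = _
  rw [key.fderiv, ContinuousLinearMap.integral_apply hi]
  refine integral_congr_ae (Filter.Eventually.of_forall fun y => ?_)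
  simp [Pi.single_apply]
  ring

/-- Infinitesimal left invariance: for a curve `R` in `SO n`, the integral of `f (R t * y)` does not
depend on `t`, so the derivative of the integrand at `t = 0` integrates to zero. -/
lemma IsHaarSO.integral_deriv_eq_zero (hμ : IsHaarSO n μ) {f : Matrix (Fin n) (Fin n) ℝ → ℝ}
    (hf : Continuous f) {R : ℝ → Matrix (Fin n) (Fin n) ℝ} (hR : ∀ t, R t ∈ SO n)
    (hRc : Continuous R) {G : ℝ → Matrix (Fin n) (Fin n) ℝ → ℝ}
    (hG : Continuous (Function.uncurry G))
    (h : ∀ t y, HasDerivAt (fun t => f (R t * y)) (G t y) t) :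
    ∫ y, G 0 y ∂μ = 0 := by
  have := hμ.isProbabilityMeasure
  have hF' : Continuous (Function.uncurry fun (t : ℝ) (y : Matrix (Fin n) (Fin n) ℝ) =>
      G t y • (1 : ℝ →L[ℝ] ℝ)) := hG.smul continuous_const
  have hi : Integrable (fun y => G 0 y • (1 : ℝ →L[ℝ] ℝ)) μ :=
    integrable_of_ae_mem_compact (isCompact_unitBox n) hμ.ae_mem_unitBox
      (hF'.comp (Continuous.prodMk_right 0))
  have key := hasFDerivAt_integral_of_compact (isCompact_unitBox n) hμ.ae_mem_unitBox
    (F := fun t y => f (R t * y)) (F' := fun t y => G t y • (1 : ℝ →L[ℝ] ℝ))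
    (by unfold Function.uncurry; fun_prop) hF'
    (fun t y => (h t y).hasFDerivAt.congr_fderiv (by ext; simp)) 0
  simp only [hμ.integral_mul_left hf (hR _)] at key
  have h0 := DFunLike.congr_fun (key.unique (hasFDerivAt_const _ _)) 1
  rw [ContinuousLinearMap.integral_apply hi] at h0
  simpa using h0

end Haar

/-! ### Rotations and cofactors in dimension three -/

/-- The rotation by the angle `t` in the `(i, j)`-plane. -/
noncomputable def planeRotation (i j : Fin 3) (t : ℝ) : Matrix (Fin 3) (Fin 3) ℝ :=
  Matrix.of fun a b =>
    if a = i then (if b = i then Real.cos t else if b = j then -Real.sin t else 0)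
    else if a = j then (if b = i then Real.sin t else if b = j then Real.cos t else 0)
    else if a = b then 1 else 0

lemma continuous_planeRotation (i j : Fin 3) : Continuous (planeRotation i j) := by
  refine continuous_matrix fun a b => ?_
  simp only [planeRotation, of_apply]
  split_ifs <;> fun_prop

/-- `(i, j, k)` is a cyclic permutation of the three indices. -/
def IsCyclicTriple (i j k : Fin 3) : Prop :=
  (i, j, k) = ((0 : Fin 3), (1 : Fin 3), (2 : Fin 3)) ∨
    (i, j, k) = ((1 : Fin 3), (2 : Fin 3), (0 : Fin 3)) ∨
    (i, j, k) = ((2 : Fin 3), (0 : Fin 3), (1 : Fin 3))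

lemma IsCyclicTriple.sum_eq {i j k : Fin 3} (h : IsCyclicTriple i j k) (u : Fin 3 → ℝ) :
    ∑ a, u a = u i + u j + u k := by
  simp only [IsCyclicTriple, Prod.mk.injEq] at h
  rcases h with ⟨rfl, rfl, rfl⟩ | ⟨rfl, rfl, rfl⟩ | ⟨rfl, rfl, rfl⟩ <;>
    rw [Fin.sum_univ_three] <;> ring

lemma IsCyclicTriple.ne {i j k : Fin 3} (h : IsCyclicTriple i j k) :
    i ≠ j ∧ k ≠ i ∧ k ≠ j := by
  simp only [IsCyclicTriple, Prod.mk.injEq] at h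
  rcases h with ⟨rfl, rfl, rfl⟩ | ⟨rfl, rfl, rfl⟩ | ⟨rfl, rfl, rfl⟩ <;> decide

lemma IsCyclicTriple.planeRotation_mem {i j k : Fin 3} (h : IsCyclicTriple i j k) (t : ℝ) :
    planeRotation i j t ∈ SO 3 := by
  have hsc := Real.sin_sq_add_cos_sq t
  simp only [IsCyclicTriple, Prod.mk.injEq] at h
  rcases h with ⟨rfl, rfl, rfl⟩ | ⟨rfl, rfl, rfl⟩ | ⟨rfl, rfl, rfl⟩ <;>
  · constructor
    · ext a b
      rw [mul_apply, Fin.sum_univ_three]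
      fin_cases a <;> fin_cases b <;> simp [planeRotation] <;> linarith
    · rw [det_fin_three]
      simp [planeRotation]
      linarith

/-- On `SO(3)` a matrix is its own cofactor matrix, in particular on the diagonal. -/
lemma IsCyclicTriple.cofactor {i j k : Fin 3} (h : IsCyclicTriple i j k)
    {y : Matrix (Fin 3) (Fin 3) ℝ} (hy : y ∈ SO 3) :
    y i i * y j j - y k k = y i j * y j i := by
  have hadj : y.adjugate = yᵀ := by
    have h1 := mul_adjugate y
    rw [hy.2, one_smul] at h1
    calc y.adjugate = (yᵀ * y) * y.adjugate := by rw [hy.1, one_mul]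
      _ = yᵀ := by rw [mul_assoc, h1, mul_one]
  have hk := congrFun (congrFun hadj k) k
  rw [adjugate_fin_three, transpose_apply] at hk
  simp only [IsCyclicTriple, Prod.mk.injEq] at h
  rcases h with ⟨rfl, rfl, rfl⟩ | ⟨rfl, rfl, rfl⟩ | ⟨rfl, rfl, rfl⟩ <;>
  · simp at hk
    linarith

/-- The integrations by parts coming from rotating the `(i, j)`-plane, applied to the functions
`yᵢⱼ exp (∑ xₐ yₐₐ)` and `yⱼᵢ exp (∑ xₐ yₐₐ)`. -/
lemma IsHaarSO.stein_identities {μ : Measure (Matrix (Fin 3) (Fin 3) ℝ)} (hμ : IsHaarSO 3 μ)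
    {i j k : Fin 3} (h : IsCyclicTriple i j k) (x : Fin 3 → ℝ) :
    x j * moment μ (fun y => y i j ^ 2) x =
        x i * moment μ (fun y => y i j * y j i) x + moment μ (fun y => y j j) x ∧
      x i * moment μ (fun y => y j i ^ 2) x =
        x j * moment μ (fun y => y i j * y j i) x + moment μ (fun y => y i i) x := by
  obtain ⟨hij, hki, hkj⟩ := h.ne
  have hri : ∀ t (y : Matrix (Fin 3) (Fin 3) ℝ) b, (planeRotation i j t * y) i b =
      Real.cos t * y i b - Real.sin t * y j b := fun t y b => by
    rw [mul_apply, h.sum_eq]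
    simp [planeRotation, hij.symm, hki, hkj]
    ring
  have hrj : ∀ t (y : Matrix (Fin 3) (Fin 3) ℝ) b, (planeRotation i j t * y) j b =
      Real.sin t * y i b + Real.cos t * y j b := fun t y b => by
    rw [mul_apply, h.sum_eq]
    simp [planeRotation, hij.symm, hki, hkj]
  have hrk : ∀ t (y : Matrix (Fin 3) (Fin 3) ℝ) b, (planeRotation i j t * y) k b = y k b :=
      fun t y b => by
    rw [mul_apply, h.sum_eq]
    simp [planeRotation, hki, hkj]
  have hexp : ∀ t (y : Matrix (Fin 3) (Fin 3) ℝ),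
      HasDerivAt (fun t => Real.exp (x i * (Real.cos t * y i i - Real.sin t * y j i)
        + x j * (Real.sin t * y i j + Real.cos t * y j j) + x k * y k k))
      (Real.exp (x i * (Real.cos t * y i i - Real.sin t * y j i)
        + x j * (Real.sin t * y i j + Real.cos t * y j j) + x k * y k k) *
       (x i * (-Real.sin t * y i i - Real.cos t * y j i)
        + x j * (Real.cos t * y i j + -Real.sin t * y j j))) t := fun t y => by
    have hc := Real.hasDerivAt_cos t
    have hs := Real.hasDerivAt_sin t
    exact (((((hc.mul_const _).sub (hs.mul_const _)).const_mul (x i)).add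
      (((hs.mul_const _).add (hc.mul_const _)).const_mul (x j))).add_const _).exp
  have e1 := hμ.integral_deriv_eq_zero (f := fun y => y i j * Real.exp (∑ a, x a * y a a))
    (by fun_prop) (fun t => h.planeRotation_mem t) (continuous_planeRotation i j)
    (G := fun t y => (-Real.sin t * y i j - Real.cos t * y j j) *
       Real.exp (x i * (Real.cos t * y i i - Real.sin t * y j i)
        + x j * (Real.sin t * y i j + Real.cos t * y j j) + x k * y k k) +
      (Real.cos t * y i j - Real.sin t * y j j) *
      (Real.exp (x i * (Real.cos t * y i i - Real.sin t * y j i)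
        + x j * (Real.sin t * y i j + Real.cos t * y j j) + x k * y k k) *
       (x i * (-Real.sin t * y i i - Real.cos t * y j i)
        + x j * (Real.cos t * y i j + -Real.sin t * y j j))))
    (by unfold Function.uncurry; fun_prop)
    (fun t y => by
      simp only [h.sum_eq, hri, hrj, hrk]
      exact (((Real.hasDerivAt_cos t).mul_const _).sub ((Real.hasDerivAt_sin t).mul_const _)).mul
        (hexp t y))
  have e2 := hμ.integral_deriv_eq_zero (f := fun y => y j i * Real.exp (∑ a, x a * y a a))
    (by fun_prop) (fun t => h.planeRotation_mem t) (continuous_planeRotation i j)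
    (G := fun t y => (Real.cos t * y i i + -Real.sin t * y j i) *
       Real.exp (x i * (Real.cos t * y i i - Real.sin t * y j i)
        + x j * (Real.sin t * y i j + Real.cos t * y j j) + x k * y k k) +
      (Real.sin t * y i i + Real.cos t * y j i) *
      (Real.exp (x i * (Real.cos t * y i i - Real.sin t * y j i)
        + x j * (Real.sin t * y i j + Real.cos t * y j j) + x k * y k k) *
       (x i * (-Real.sin t * y i i - Real.cos t * y j i)
        + x j * (Real.cos t * y i j + -Real.sin t * y j j))))
    (by unfold Function.uncurry; fun_prop)
    (fun t y => by
      simp only [h.sum_eq, hri, hrj, hrk]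
      exact (((Real.hasDerivAt_sin t).mul_const _).add ((Real.hasDerivAt_cos t).mul_const _)).mul
        (hexp t y))
  have hint : ∀ p : Matrix (Fin 3) (Fin 3) ℝ → ℝ, Continuous p →
      Integrable (fun y => p y * Real.exp (∑ a, x a * y a a)) μ :=
    fun p hp => hμ.integrable (by fun_prop)
  have i1 := hint (fun y => y i j ^ 2) (by fun_prop)
  have i2 := hint (fun y => y i j * y j i) (by fun_prop)
  have i3 := hint (fun y => y j j) (by fun_prop)
  have i4 := hint (fun y => y j i ^ 2) (by fun_prop)
  have i5 := hint (fun y => y i i) (by fun_prop)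
  unfold moment
  simp only [← integral_const_mul]
  constructor
  · rw [← integral_add (i2.const_mul _) i3, ← sub_eq_zero,
      ← integral_sub (i1.const_mul _) (hμ.integrable (by fun_prop)), ← e1]
    refine integral_congr_ae (Filter.Eventually.of_forall fun y => ?_)
    simp only [h.sum_eq, Real.cos_zero, Real.sin_zero]
    ring_nf
  · rw [← integral_add (i2.const_mul _) i5, eq_comm, ← sub_eq_zero,
      ← integral_sub (hμ.integrable (by fun_prop)) (i4.const_mul _), ← e2]
    refine integral_congr_ae (Filter.Eventually.of_forall fun y => ?_)
    simp only [h.sum_eq, Real.cos_zero, Real.sin_zero]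
    ring_nf

theorem fisherDiag_SO3_extra_operators
    (μ : Measure (Matrix (Fin 3) (Fin 3) ℝ)) (hμ : IsHaarSO 3 μ)
    (i j k : Fin 3)
    (hijk : (i, j, k) = ((0 : Fin 3), (1 : Fin 3), (2 : Fin 3)) ∨
            (i, j, k) = ((1 : Fin 3), (2 : Fin 3), (0 : Fin 3)) ∨
            (i, j, k) = ((2 : Fin 3), (0 : Fin 3), (1 : Fin 3)))
    (x : Fin 3 → ℝ) :
    (x i ^ 2 - x j ^ 2) * pdiag i (pdiag j (fisherDiag 3 μ)) x
      - (x j * pdiag i (fisherDiag 3 μ) x - x i * pdiag j (fisherDiag 3 μ) x)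
      - (x i ^ 2 - x j ^ 2) * pdiag k (fisherDiag 3 μ) x = 0 := by
  have h : IsCyclicTriple i j k := hijk
  obtain ⟨e1, e2⟩ := hμ.stein_identities h x
  -- The weight only involves diagonal entries, so transposing merely swaps `y i j` and `y j i`.
  have hsq : moment μ (fun y => y j i ^ 2) x = moment μ (fun y => y i j ^ 2) x :=
    hμ.integral_transpose (f := fun y => y i j ^ 2 * Real.exp (∑ a, x a * y a a)) (by fun_prop)
  have hp : moment μ (fun y => y i i * y j j) x - moment μ (fun y => y k k) x =
      moment μ (fun y => y i j * y j i) x := by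
    unfold moment
    rw [← integral_sub (hμ.integrable (by fun_prop)) (hμ.integrable (by fun_prop))]
    refine integral_congr_ae (hμ.ae_mem.mono fun y hy => ?_)
    simp only [← h.cofactor hy]
    ring
  rw [fisherDiag_eq_moment, hμ.pdiag_moment continuous_const, hμ.pdiag_moment continuous_const,
    hμ.pdiag_moment continuous_const, hμ.pdiag_moment (by fun_prop)]
  simp only [mul_one]
  rw [hsq] at e2
  linear_combination (x i ^ 2 - x j ^ 2) * hp + x j * e2 - x i * e1
end
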